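/- The image of a CO-charming space under a continuous map is CO-charming: if X is a CO-charming space, Z is a topological space, and f : X → Z is a continuous surjection, then Z is CO-charming. -/

import Mathlib

open Set Function TopologicalSpace

universe u

/-- A map between topological spaces is *perfect* if it is continuous, closed, and
every fiber is compact. -/
def PerfectMap {Y : Type*} {Z : Type*} [TopologicalSpace Y] [TopologicalSpace Z]
    (f : Y → Z) : Prop :=
  Continuous f ∧ IsClosedMap f ∧ ∀ z : Z, IsCompact (f ⁻¹' {z})

/-- A topological space `X` is a *Lindelöf Σ-space* if there exist a topological space `Y`,
a continuous surjection from `Y` onto `X`, and a perfect surjection from `Y` onto some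
second-countable space. -/
def IsLindelofSigma (X : Type u) [TopologicalSpace X] : Prop :=
  ∃ (Y : Type u) (tY : TopologicalSpace Y) (Z : Type u) (tZ : TopologicalSpace Z),
    @SecondCountableTopology Z tZ ∧
    (∃ f : Y → X, @Continuous Y X tY _ f ∧ Surjective f) ∧
    (∃ g : Y → Z, @PerfectMap Y Z tY tZ g ∧ Surjective g)

/-- A topological space `X` is a *charming space* if there is a subset `Y` of `X` that is a
Lindelöf Σ-space in the subspace topology and such that for every open `U ⊇ Y`,
the set `X \ U` is a Lindelöf Σ-space in the subspace topology. -/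
def IsCharming (X : Type u) [TopologicalSpace X] : Prop :=
  ∃ Y : Set X, IsLindelofSigma Y ∧
    ∀ U : Set X, IsOpen U → Y ⊆ U → IsLindelofSigma ↥(Uᶜ)

/-- A *CL-charming* space: the shell `Y` can be chosen closed. -/
def IsCLCharming (X : Type u) [TopologicalSpace X] : Prop :=
  ∃ Y : Set X, IsClosed Y ∧ IsLindelofSigma Y ∧
    ∀ U : Set X, IsOpen U → Y ⊆ U → IsLindelofSigma ↥(Uᶜ)

/-- A *CO-charming* space: the shell `Y` can be chosen compact. -/
def IsCOCharming (X : Type u) [TopologicalSpace X] : Prop :=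
  ∃ Y : Set X, IsCompact Y ∧ IsLindelofSigma Y ∧
    ∀ U : Set X, IsOpen U → Y ⊆ U → IsLindelofSigma ↥(Uᶜ)

/-- A space has a *countable network* if there is a countable family `N` of subsets such that
every point in every open set `V` is contained in a member of `N` contained in `V`. -/
def HasCountableNetwork (X : Type u) [TopologicalSpace X] : Prop :=
  ∃ N : Set (Set X), N.Countable ∧
    ∀ x : X, ∀ V : Set X, IsOpen V → x ∈ V → ∃ n ∈ N, x ∈ n ∧ n ⊆ V

/-- A topological space `X` is *weak (4,4)-structured* if there exist a topological space `Y`,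
a continuous surjection from `Y` onto `X`, and a perfect surjection from `Y` onto some
charming space. -/
def IsWeak44Structured (X : Type u) [TopologicalSpace X] : Prop :=
  ∃ (Y : Type u) (tY : TopologicalSpace Y) (M : Type u) (tM : TopologicalSpace M),
    @IsCharming M tM ∧
    (∃ f : Y → X, @Continuous Y X tY _ f ∧ Surjective f) ∧
    (∃ g : Y → M, @PerfectMap Y M tY tM g ∧ Surjective g)

namespace IsLindelofSigma

theorem of_continuous_surjective {X Z : Type u} [TopologicalSpace X] [TopologicalSpace Z]
    (hX : IsLindelofSigma X) {f : X → Z} (hf : Continuous f) (hsurj : Surjective f) :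
    IsLindelofSigma Z := by
  obtain ⟨Y, tY, M, tM, hM, ⟨p, hp, hpsurj⟩, hperfect⟩ := hX
  exact ⟨Y, tY, M, tM, hM, ⟨f ∘ p, hf.comp hp, hsurj.comp hpsurj⟩, hperfect⟩

theorem image_of_continuousOn {X Z : Type u} [TopologicalSpace X] [TopologicalSpace Z]
    {s : Set X} (hs : IsLindelofSigma s) {f : X → Z} (hf : ContinuousOn f s) :
    IsLindelofSigma ↥(f '' s) :=
  hs.of_continuous_surjective (hf.mapsToRestrict (mapsTo_image f s)) imageFactorization_surjective

end IsLindelofSigma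

theorem continuous_image_of_COCharming_general {X Z : Type u}
    [TopologicalSpace X] [TopologicalSpace Z] (hX : IsCOCharming X) {f : X → Z}
    (hf : Continuous f) (hsurj : Surjective f) : IsCOCharming Z := by
  obtain ⟨K, hK, hKSigma, hcompl⟩ := hX
  refine ⟨f '' K, hK.image hf, hKSigma.image_of_continuousOn hf.continuousOn, fun U hU hKU ↦ ?_⟩
  have hpre : IsLindelofSigma ↥(f ⁻¹' U)ᶜ :=
    hcompl (f ⁻¹' U) (hU.preimage hf) (image_subset_iff.mp hKU)
  have himage : f '' (f ⁻¹' U)ᶜ = Uᶜ := image_preimage_eq Uᶜ hsurj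
  exact himage ▸ hpre.image_of_continuousOn hf.continuousOn

/-- The image of a CO-charming space under a continuous surjection is CO-charming. -/
theorem continuous_image_of_COCharming {X : Type u} {Z : Type u}
    [TopologicalSpace X] [T35Space X] [TopologicalSpace Z] [T35Space Z]
    (hX : IsCOCharming X) (f : X → Z) (hf : Continuous f) (hsurj : Surjective f) :
    IsCOCharming Z := by
  exact continuous_image_of_COCharming_general hX hf hsurj
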